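/- For every positive integer n, the noiseless SMSE of the dictator function equals M(X^n | dic(X^n)) = (n − 1)/4, and the dictator maximizes the noiseless SMSE among balanced Boolean functions: for every Boolean function b : {0,1}^n → {0,1} with P[b(X^n) = 1] = 1/2, one has M(X^n | b(X^n)) ≤ (n − 1)/4. -/

import Mathlib

/-!
The upper bound compares the SMSE with Shannon entropy. The scalar inequality
`4 q (1 - q) ≤ h(q)` (entropy in bits) turns each term `E[Q_k (1 - Q_k)]` into at most a quarter of
the conditional entropy of `X_k` given the past, so by the chain rule the SMSE of a uniform vector
on a set `A` is at most `log₂ |A| / 4`. For balanced `b` both level sets have `2 ^ (n - 1)`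
elements, which gives `(n - 1) / 4`.

The chain rule is an induction on `n`: splitting off the first coordinate, `smse_succ` writes the
SMSE of `μ` as `a b / (a + b)` plus the SMSEs of the two slices of `μ`, where `a`, `b` are the masses
of the slices. Working with unnormalized `μ` avoids conditioning. The same recursion evaluates the
SMSE of a constant mass function, hence of the dictator.

For the scalar inequality put `q = (1 + t) / 2`. Then `2 (log 2 - h(q))` (in nats) is
`entGap t = (1 + t) log (1 + t) + (1 - t) log (1 - t)`, whose Taylor series is
`∑ t ^ (2 k + 2) (2 / (2 k + 1) - 1 / (k + 1))`, with nonnegative coefficients. Hence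
`entGap t / t ^ 2` is monotone on `(0, 1)` and is bounded by its limit `2 log 2` at `1`.
-/

open Finset MeasureTheory

noncomputable section

/-- Conditional probability that coordinate `k` equals `true` given the coordinates
before `k`, under the (possibly unnormalized) pmf `μ` on `{0,1}^n`. -/
def condQ {n : ℕ} (μ : (Fin n → Bool) → ℝ) (k : Fin n) (x : Fin n → Bool) : ℝ :=
  (∑ y ∈ Finset.univ.filter
      (fun y : Fin n → Bool => (∀ i : Fin n, i < k → y i = x i) ∧ y k = true), μ y) /
  (∑ y ∈ Finset.univ.filter
      (fun y : Fin n → Bool => ∀ i : Fin n, i < k → y i = x i), μ y)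

/-- The `k`-th term `E[Q_k (1 - Q_k)]` of the sequential mean squared error. -/
def smseTerm {n : ℕ} (μ : (Fin n → Bool) → ℝ) (k : Fin n) : ℝ :=
  ∑ x : Fin n → Bool, μ x * (condQ μ k x * (1 - condQ μ k x))

/-- The sequential mean squared error `M(U^n) = Σ_k E[Q_k (1 - Q_k)]`. -/
def smse {n : ℕ} (μ : (Fin n → Bool) → ℝ) : ℝ := ∑ k : Fin n, smseTerm μ k

/-- The uniform pmf on `{0,1}^n`. -/
def unif (n : ℕ) : (Fin n → Bool) → ℝ := fun _ => ((2 : ℝ) ^ n)⁻¹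

/-- The SMSE of `μ` given the side information `b` :
`M(X^n | b(X^n)) = Σ_c Σ_k E[Q_k (1-Q_k)]` where `Q_k = P[X_k = 1 | X^{k-1}, b(X^n)]`. -/
def condSMSE {n : ℕ} (μ : (Fin n → Bool) → ℝ) (b : (Fin n → Bool) → Bool) : ℝ :=
  ∑ c : Bool, smse (fun x => if b x = c then μ x else 0)

/-- Hamming weight. -/
def hw {n : ℕ} (x : Fin n → Bool) : ℕ := (Finset.univ.filter (fun i => x i = true)).card

/-- The majority function: `1` iff the Hamming weight exceeds `n/2`. -/
def majF (n : ℕ) : (Fin n → Bool) → Bool := fun x => decide (n < 2 * hw x)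

/-- The joint pmf `y ↦ P[Y^n = y, b(X^n) = c]` where `X^n` is uniform and
`Y^n = X^n ⊕ Z^n` with `Z^n` i.i.d. Bernoulli(α). -/
def noisyPMF (n : ℕ) (α : ℝ) (b : (Fin n → Bool) → Bool) (c : Bool) :
    (Fin n → Bool) → ℝ :=
  fun y => ∑ x : Fin n → Bool,
    if b x = c then ((2 : ℝ) ^ n)⁻¹ * ∏ i : Fin n, (if y i = x i then 1 - α else α) else 0

/-- The noisy SMSE `M(Y^n | b(X^n))`. -/
def noisySMSE (n : ℕ) (α : ℝ) (b : (Fin n → Bool) → Bool) : ℝ :=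
  ∑ c : Bool, smse (noisyPMF n α b c)

/-- The binary entropy function (base 2). -/
def binEnt (p : ℝ) : ℝ := -(p * Real.logb 2 p) - (1 - p) * Real.logb 2 (1 - p)

/-- `μ(α) = h(arccos(1-2α)/π)`. -/
def muF (α : ℝ) : ℝ := binEnt (Real.arccos (1 - 2 * α) / Real.pi)

/-- Base-2 Shannon entropy of a pmf on a finite type. -/
def entropy {β : Type*} [Fintype β] (p : β → ℝ) : ℝ := ∑ x : β, -(p x * Real.logb 2 (p x))

open scoped Classical in
/-- Pushforward pmf along `f`. -/
def push {β γ : Type*} [Fintype β] (μ : β → ℝ) (f : β → γ) : γ → ℝ :=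
  fun c => ∑ x ∈ Finset.univ.filter (fun x => f x = c), μ x

/-- The pmf of a majority random vector: uniform on `{v : w(v) > n/2}`. -/
def majPMF (n : ℕ) : (Fin n → Bool) → ℝ :=
  fun v => if n < 2 * hw v then
    (((Finset.univ.filter (fun u : Fin n → Bool => n < 2 * hw u)).card : ℝ))⁻¹ else 0

/-- Standard Gaussian density. -/
def stdPdf (t : ℝ) : ℝ := Real.exp (-(t ^ 2) / 2) / Real.sqrt (2 * Real.pi)

/-- Gaussian tail function `Q(u) = P[G > u]`. -/
def gaussQ (u : ℝ) : ℝ := ∫ s in Set.Ioi u, stdPdf s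

/-- Base-2 conditional Shannon entropy `H(C | Y)` for the joint pmf `J`. -/
def condEntBool {β : Type*} [Fintype β] (J : β → Bool → ℝ) : ℝ :=
  ∑ y : β, ∑ c : Bool, -(J y c * Real.logb 2 (J y c / (∑ c' : Bool, J y c')))

end

/-- Twice the entropy deficit `log 2 - h((1 + t) / 2)`, in nats. -/
noncomputable def entGap (t : ℝ) : ℝ := (1 + t) * Real.log (1 + t) + (1 - t) * Real.log (1 - t)

lemma hasSum_entGap {t : ℝ} (h0 : 0 ≤ t) (h1 : t < 1) :
    HasSum (fun k : ℕ => t ^ (2 * k + 2) * (2 / (2 * k + 1) - 1 / (k + 1))) (entGap t) := by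
  have hs := (Real.hasSum_log_sub_log_of_abs_lt_one (x := t)
    (by rw [abs_of_nonneg h0]; exact h1)).mul_left t
  have ht2 : t ^ 2 < 1 := by nlinarith
  have hl := Real.hasSum_pow_div_log_of_abs_lt_one (x := t ^ 2)
    (by rw [abs_of_nonneg (by positivity)]; exact ht2)
  have hsub := hs.sub hl
  have e : t * (Real.log (1 + t) - Real.log (1 - t)) - -Real.log (1 - t ^ 2) = entGap t := by
    have : (1 - t ^ 2) = (1 + t) * (1 - t) := by ring
    rw [this, Real.log_mul (by linarith) (by linarith), entGap]
    ring
  rw [e] at hsub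
  refine Eq.subst (motive := fun f => HasSum f (entGap t)) (funext fun k => ?_) hsub
  rw [← pow_mul]
  ring

lemma entGap_mul_le {t s : ℝ} (h0 : 0 ≤ t) (hts : t ≤ s) (h1 : s < 1) :
    entGap t * s ^ 2 ≤ entGap s * t ^ 2 := by
  refine hasSum_le (fun k => ?_) ((hasSum_entGap h0 (by linarith)).mul_right (s ^ 2))
    ((hasSum_entGap (by linarith) h1).mul_right (t ^ 2))
  have hc : (0 : ℝ) ≤ 2 / (2 * k + 1) - 1 / (k + 1) := by
    rw [sub_nonneg, div_le_div_iff₀ (by positivity) (by positivity)]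
    linarith
  have hp : t ^ (2 * k) ≤ s ^ (2 * k) := pow_le_pow_left₀ h0 hts _
  have : 0 ≤ (s ^ (2 * k) - t ^ (2 * k)) * (t ^ 2 * s ^ 2 * (2 / (2 * k + 1) - 1 / (k + 1))) :=
    mul_nonneg (by linarith) (by positivity)
  rw [pow_add, pow_add]
  linarith

lemma entGap_le {t : ℝ} (h0 : 0 ≤ t) (h1 : t < 1) : entGap t ≤ 2 * Real.log 2 * t ^ 2 := by
  have hcont : Continuous entGap :=
    (Real.continuous_mul_log.comp (continuous_const.add continuous_id)).add
      (Real.continuous_mul_log.comp (continuous_const.sub continuous_id))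
  -- Letting `s → 1` in `entGap_mul_le`.
  have hL : Filter.Tendsto (fun s => entGap t * s ^ 2) (nhdsWithin 1 (Set.Iio 1))
      (nhds (entGap t * 1 ^ 2)) :=
    ((by fun_prop : Continuous fun s : ℝ => entGap t * s ^ 2).tendsto 1).mono_left
      nhdsWithin_le_nhds
  have hR : Filter.Tendsto (fun s => entGap s * t ^ 2) (nhdsWithin 1 (Set.Iio 1))
      (nhds (entGap 1 * t ^ 2)) :=
    ((by fun_prop : Continuous fun s : ℝ => entGap s * t ^ 2).tendsto 1).mono_left
      nhdsWithin_le_nhds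
  have h := le_of_tendsto_of_tendsto hL hR (by
    filter_upwards [Ioo_mem_nhdsLT h1] with s hs
    exact entGap_mul_le h0 hs.1.le hs.2)
  have e : entGap 1 = 2 * Real.log 2 := by
    norm_num [entGap]
  rw [e] at h
  linarith

/-- The inequality `4 q (1 - q) ≤ h(q)` with `q = a / (a + b)`, scaled by `a + b`. -/
lemma four_log_two_mul_le {a b : ℝ} (ha : 0 ≤ a) (hb : 0 ≤ b) :
    4 * Real.log 2 * (a * b / (a + b)) ≤
      (a + b) * Real.log (a + b) - a * Real.log a - b * Real.log b := by
  wlog hab : b ≤ a generalizing a b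
  · have := this hb ha (by linarith)
    rw [add_comm b a, mul_comm b a] at this
    linarith
  rcases hb.eq_or_lt with rfl | hb
  · simp
  have ha : 0 < a := by linarith
  have hs : 0 < a + b := by linarith
  set t := (a - b) / (a + b) with ht
  have h := entGap_le (t := t) (div_nonneg (by linarith) hs.le)
    (by rw [ht, div_lt_one hs]; linarith)
  have e1 : 1 + t = 2 * a / (a + b) := by rw [ht]; field_simp; ring
  have e2 : 1 - t = 2 * b / (a + b) := by rw [ht]; field_simp; ring
  rw [entGap, e1, e2, Real.log_div (by positivity) hs.ne', Real.log_div (by positivity) hs.ne',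
    Real.log_mul two_ne_zero ha.ne', Real.log_mul two_ne_zero hb.ne'] at h
  have h2 := mul_le_mul_of_nonneg_right h (by linarith : 0 ≤ (a + b) / 2)
  have e3 : (2 * a / (a + b) * (Real.log 2 + Real.log a - Real.log (a + b)) +
      2 * b / (a + b) * (Real.log 2 + Real.log b - Real.log (a + b))) * ((a + b) / 2) =
      a * (Real.log 2 + Real.log a - Real.log (a + b)) +
        b * (Real.log 2 + Real.log b - Real.log (a + b)) := by
    field_simp
  have e4 : 2 * Real.log 2 * t ^ 2 * ((a + b) / 2) =
      Real.log 2 * (a + b) - 4 * Real.log 2 * (a * b / (a + b)) := by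
    rw [ht]; field_simp; ring
  rw [e3, e4] at h2
  linarith

lemma sum_cons {n : ℕ} (f : (Fin (n + 1) → Bool) → ℝ) :
    ∑ x, f x = ∑ y, f (Fin.cons false y) + ∑ y, f (Fin.cons true y) := by
  rw [← (Fin.consEquiv (fun _ : Fin (n + 1) => Bool)).sum_comp, Fintype.sum_prod_type,
    Fintype.sum_bool, add_comm]
  rfl

/-- Conditioning on a prefix whose first bit is `c` amounts to passing to the slice of `μ` at
`c`. -/
lemma condQ_cons {n : ℕ} (μ : (Fin (n + 1) → Bool) → ℝ) (k : Fin n) (c : Bool)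
    (x : Fin n → Bool) :
    condQ μ k.succ (Fin.cons c x) = condQ (fun y => μ (Fin.cons c y)) k x := by
  unfold condQ
  simp only [Finset.sum_filter]
  rw [sum_cons, sum_cons]
  cases c <;> simp [Fin.forall_fin_succ]

lemma condQ_zero {n : ℕ} (μ : (Fin (n + 1) → Bool) → ℝ) (x : Fin (n + 1) → Bool) :
    condQ μ 0 x = (∑ y, μ (Fin.cons true y)) /
      (∑ y, μ (Fin.cons false y) + ∑ y, μ (Fin.cons true y)) := by
  unfold condQ
  simp only [Finset.sum_filter]
  rw [sum_cons, sum_cons]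
  simp

/-- Chain rule for the SMSE: splitting off the first coordinate. It also holds when the total mass
is `0`, both sides of the first-coordinate identity then being `0`. -/
lemma smse_succ {n : ℕ} (μ : (Fin (n + 1) → Bool) → ℝ) :
    smse μ = (∑ y, μ (Fin.cons false y)) * (∑ y, μ (Fin.cons true y)) /
        (∑ y, μ (Fin.cons false y) + ∑ y, μ (Fin.cons true y)) +
      smse (fun y => μ (Fin.cons false y)) + smse (fun y => μ (Fin.cons true y)) := by
  have h0 : smseTerm μ 0 = (∑ y, μ (Fin.cons false y)) * (∑ y, μ (Fin.cons true y)) /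
        (∑ y, μ (Fin.cons false y) + ∑ y, μ (Fin.cons true y)) := by
    unfold smseTerm
    simp only [condQ_zero]
    rw [← Finset.sum_mul, sum_cons]
    set a := ∑ y, μ (Fin.cons false y)
    set b := ∑ y, μ (Fin.cons true y)
    by_cases h : a + b = 0
    · simp [h]
    · field_simp
      ring
  have hk : ∀ k : Fin n, smseTerm μ k.succ =
      smseTerm (fun y => μ (Fin.cons false y)) k + smseTerm (fun y => μ (Fin.cons true y)) k := by
    intro k
    unfold smseTerm
    rw [sum_cons]
    simp only [condQ_cons]
  unfold smse
  rw [Fin.sum_univ_succ, h0, Finset.sum_congr rfl (fun k _ => hk k), Finset.sum_add_distrib]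
  ring

/-- The SMSE is at most a quarter of the entropy in bits, for an unnormalized mass function. -/
lemma smse_le_entropy {n : ℕ} (μ : (Fin n → Bool) → ℝ) (hμ : ∀ x, 0 ≤ μ x) :
    4 * Real.log 2 * smse μ ≤
      (∑ x, μ x) * Real.log (∑ x, μ x) - ∑ x, μ x * Real.log (μ x) := by
  induction n with
  | zero => simp [smse]
  | succ n ih =>
    have hF := ih (fun y => μ (Fin.cons false y)) (fun _ => hμ _)
    have hT := ih (fun y => μ (Fin.cons true y)) (fun _ => hμ _)
    have h := four_log_two_mul_le (Finset.sum_nonneg fun y (_ : y ∈ Finset.univ) => hμ (Fin.cons false y))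
      (Finset.sum_nonneg fun y (_ : y ∈ Finset.univ) => hμ (Fin.cons true y))
    rw [smse_succ, sum_cons μ, sum_cons (fun x => μ x * Real.log (μ x))]
    linarith

lemma smse_const (n : ℕ) (r : ℝ) : smse (fun _ : Fin n → Bool => r) = r * 2 ^ n * n / 4 := by
  induction n with
  | zero => simp [smse]
  | succ n ih =>
    rw [smse_succ (fun _ => r), ih]
    by_cases hr : r = 0
    · simp [hr]
    · simp
      field_simp
      ring

/-- Each level set of probability `1 / 2` contributes at most `(n - 1) / 8`. -/
lemma smse_half_le {n : ℕ} (b : (Fin n → Bool) → Bool) (c : Bool)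
    (h : ∑ x, (if b x = c then unif n x else 0) = 1 / 2) :
    smse (fun x => if b x = c then unif n x else 0) ≤ ((n : ℝ) - 1) / 8 := by
  have hle := smse_le_entropy (fun x => if b x = c then unif n x else 0) (fun x => by
    dsimp only [unif]; split_ifs <;> positivity)
  have e : ∑ x, (if b x = c then unif n x else 0) *
      Real.log (if b x = c then unif n x else 0) = 1 / 2 * -(n * Real.log 2) := by
    rw [← h, Finset.sum_mul]
    refine Finset.sum_congr rfl fun x _ => ?_
    split_ifs
    · simp [unif, Real.log_inv, Real.log_pow]
    · simp
  rw [e, h, one_div, Real.log_inv] at hle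
  have hl : 0 < Real.log 2 := Real.log_pos one_lt_two
  refine le_of_mul_le_mul_left ?_ (by positivity : 0 < 4 * Real.log 2)
  linarith

theorem stmt2 (n : ℕ) (hn : 0 < n) :
    condSMSE (unif n) (fun x => x ⟨0, hn⟩) = ((n : ℝ) - 1) / 4 ∧
    ∀ b : (Fin n → Bool) → Bool,
      (∑ x ∈ Finset.univ.filter (fun x : Fin n → Bool => b x = true), unif n x) = 1 / 2 →
      condSMSE (unif n) b ≤ ((n : ℝ) - 1) / 4 := by
  constructor
  · obtain ⟨m, rfl⟩ : ∃ m, n = m + 1 := ⟨n - 1, by omega⟩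
    have h0 : (⟨0, hn⟩ : Fin (m + 1)) = 0 := rfl
    simp only [condSMSE, Fintype.sum_bool, h0]
    rw [smse_succ, smse_succ]
    simp only [Fin.cons_zero, unif, reduceCtorEq, if_true, if_false, smse_const]
    simp
    field_simp
    ring
  · intro b hb
    have hT : ∑ x, (if b x = true then unif n x else 0) = 1 / 2 := by
      rw [← hb, Finset.sum_filter]
    have htot : ∑ x, unif n x = 1 := by simp [unif]
    have hF : ∑ x, (if b x = false then unif n x else 0) = 1 / 2 := by
      have : ∑ x, (if b x = true then unif n x else 0) +
          ∑ x, (if b x = false then unif n x else 0) = 1 := by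
        rw [← htot, ← Finset.sum_add_distrib]
        refine Finset.sum_congr rfl fun x _ => ?_
        cases b x <;> simp
      linarith
    have h1 := smse_half_le b true hT
    have h2 := smse_half_le b false hF
    rw [condSMSE, Fintype.sum_bool]
    linarith
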